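/- Finitely many function terms and standard names suffice for case splits: let s be a set of clauses, α an objective formula, F a finite set of function terms containing all function terms occurring in s and α, N a finite set of standard names containing all names occurring in s and α, and n̂ ∉ N an additional name. Then s ⊨ˢ B_{k+1} α if and only if there is some t ∈ F such that for all n ∈ N ∪ {n̂}, s ∪ {t ≈ n} ⊨ˢ B_k α. -/

import Mathlib

/-! ## Limited belief: basic syntax and semantics (Schwering 2017, quantifier-free). -/

/-- Standard names (a countably infinite supply). -/
abbrev Name := ℕ

/-- Function terms `f(n₁,…,n_j)`: a function symbol applied to standard names. -/
structure FnTerm where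
  sym : ℕ
  args : List Name
deriving DecidableEq, Inhabited

/-- Literals `t ≈ n` (pos) and `t ≉ n` (neg). -/
inductive Lit where
  | pos (t : FnTerm) (n : Name)
  | neg (t : FnTerm) (n : Name)
deriving DecidableEq

instance : Inhabited Lit := ⟨.pos default 0⟩

/-- The left-hand side (function term) of a literal. -/
def Lit.lhs : Lit → FnTerm
  | .pos t _ => t
  | .neg t _ => t

/-- The right-hand side (standard name) of a literal. -/
def Lit.rhs : Lit → Name
  | .pos _ n => n
  | .neg _ n => n

/-- The negation `¬ℓ` of a literal. -/
def Lit.negate : Lit → Lit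
  | .pos t n => .neg t n
  | .neg t n => .pos t n

/-- Names occurring in a literal. -/
def Lit.names (ℓ : Lit) : Finset Name := insert ℓ.rhs ℓ.lhs.args.toFinset

/-- Two literals are complementary iff they are of the form `t ≈ n` and `t ≉ n`,
or of the form `t ≈ n` and `t ≈ n'` for distinct `n, n'`. -/
def Lit.complementary : Lit → Lit → Bool
  | .pos t n, .neg t' n' => t == t' && n == n'
  | .neg t n, .pos t' n' => t == t' && n == n'
  | .pos t n, .pos t' n' => t == t' && n != n'
  | .neg _ _, .neg _ _ => false

/-- A clause is a (finite) set of literals. -/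
abbrev Clause := Finset Lit

/-- Unit propagation of clause `c` with literal `ℓ`: remove from `c` all
literals complementary to `ℓ`. -/
def Clause.prop (c : Clause) (ℓ : Lit) : Clause :=
  c.filter (fun ℓ' => Lit.complementary ℓ' ℓ = false)

/-- `c₁` subsumes `c₂` iff for every `t ≈ n ∈ c₁`, `t ≈ n ∈ c₂` or `t ≉ n' ∈ c₂`
for some `n' ≠ n`, and for every `t ≉ n ∈ c₁`, `t ≉ n ∈ c₂`. -/
def Clause.subsumes (c₁ c₂ : Clause) : Prop :=
  (∀ t n, Lit.pos t n ∈ c₁ → Lit.pos t n ∈ c₂ ∨ ∃ n', n' ≠ n ∧ Lit.neg t n' ∈ c₂) ∧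
  (∀ t n, Lit.neg t n ∈ c₁ → Lit.neg t n ∈ c₂)

/-- `UP s`: the closure of the set of clauses `s` under unit propagation and
subsumption.  `UP s c` means `c ∈ UP(s)`. -/
inductive UP (s : Set Clause) : Clause → Prop
  | mem {c : Clause} : c ∈ s → UP s c
  | unit {c : Clause} {ℓ : Lit} : UP s {ℓ} → UP s c → UP s (c.prop ℓ)
  | sub {c₁ c₂ : Clause} : UP s c₁ → c₁.subsumes c₂ → UP s c₂

/-- Objective formulas: literals (`atom` is `t ≈ n`, `not atom` is `t ≉ n`),
negation and disjunction. -/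
inductive Form where
  | atom (t : FnTerm) (n : Name)
  | not (φ : Form)
  | or (φ ψ : Form)
deriving DecidableEq

/-- `α ∧ β` abbreviates `¬(¬α ∨ ¬β)`. -/
def Form.and (φ ψ : Form) : Form := .not (.or (.not φ) (.not ψ))

/-- `α → β` abbreviates `¬α ∨ β`. -/
def Form.imp (φ ψ : Form) : Form := .or (.not φ) ψ

/-- A formula is (syntactically) a clause iff it is a disjunction of literals. -/
def Form.isClause : Form → Bool
  | .atom _ _ => true
  | .not (.atom _ _) => true
  | .not _ => false
  | .or φ ψ => φ.isClause && ψ.isClause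

/-- The set of literals of a clause-formula. -/
def Form.lits : Form → Clause
  | .atom t n => {Lit.pos t n}
  | .not (.atom t n) => {Lit.neg t n}
  | .not _ => ∅
  | .or φ ψ => φ.lits ∪ ψ.lits

/-- The limited-belief truth relation `s ⊨ˢ α` for objective formulas:
a clause is true iff it is in `UP(s)`; a non-clause disjunction is true iff one
of its disjuncts is; `¬(α ∨ β)` is true iff `¬α` and `¬β` are; `¬¬α` is true
iff `α` is. -/
def sat (s : Set Clause) : Form → Prop
  | .atom t n => UP s {Lit.pos t n}
  | .not (.atom t n) => UP s {Lit.neg t n}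
  | .not (.not φ) => sat s φ
  | .not (.or φ ψ) => sat s (.not φ) ∧ sat s (.not ψ)
  | .or φ ψ => if (Form.or φ ψ).isClause then UP s (Form.or φ ψ).lits
               else sat s φ ∨ sat s ψ

/-- `satB s k α` is `s ⊨ˢ B_k α`: `B₀ α` holds iff `α` does, and `B_{k+1} α`
holds iff for some function term `t`, for all names `n`,
`s ∪ {t ≈ n} ⊨ˢ B_k α`. -/
def satB (s : Set Clause) : ℕ → Form → Prop
  | 0, φ => sat s φ
  | k+1, φ => ∃ t : FnTerm, ∀ n : Name, satB (s ∪ {({Lit.pos t n} : Clause)}) k φ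

/-- A world maps function terms to standard names. -/
abbrev World := FnTerm → Name

/-- Classical truth of a literal in a world. -/
def Lit.holds (w : World) : Lit → Prop
  | .pos t n => w t = n
  | .neg t n => w t ≠ n

/-- Classical truth of a clause in a world. -/
def Clause.holds (w : World) (c : Clause) : Prop := ∃ ℓ ∈ c, ℓ.holds w

/-- Classical truth of an objective formula in a world. -/
def wsat (w : World) : Form → Prop
  | .atom t n => w t = n
  | .not φ => ¬ wsat w φ
  | .or φ ψ => wsat w φ ∨ wsat w ψ

/-- Classical entailment `s ⊨ α`. -/
def entails (s : Set Clause) (φ : Form) : Prop :=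
  ∀ w : World, (∀ c ∈ s, c.holds w) → wsat w φ

/-- Classical entailment of a clause (disjunction of its literals). -/
def entailsClause (s : Set Clause) (c : Clause) : Prop :=
  ∀ w : World, (∀ c' ∈ s, c'.holds w) → c.holds w

/-- Function terms mentioned in a formula. -/
def Form.terms : Form → Finset FnTerm
  | .atom t _ => {t}
  | .not φ => φ.terms
  | .or φ ψ => φ.terms ∪ ψ.terms

/-- Standard names mentioned in a formula. -/
def Form.names : Form → Finset Name
  | .atom t n => insert n t.args.toFinset
  | .not φ => φ.names
  | .or φ ψ => φ.names ∪ ψ.names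

theorem lits_mem : ∀ (φ : Form) (ℓ : Lit), ℓ ∈ φ.lits → ℓ.lhs ∈ φ.terms ∧ ℓ.rhs ∈ φ.names
  | .atom t n, ℓ, h => by
    simp only [Form.lits, Finset.mem_singleton] at h
    subst h
    simp [Lit.lhs, Lit.rhs, Form.terms, Form.names]
  | .not (.atom t n), ℓ, h => by
    simp only [Form.lits, Finset.mem_singleton] at h
    subst h
    simp [Lit.lhs, Lit.rhs, Form.terms, Form.names]
  | .not (.not φ), ℓ, h => by simp [Form.lits] at h
  | .not (.or φ ψ), ℓ, h => by simp [Form.lits] at h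
  | .or φ ψ, ℓ, h => by
    simp only [Form.lits, Finset.mem_union] at h
    simp only [Form.terms, Form.names, Finset.mem_union]
    rcases h with h | h
    · have := lits_mem φ ℓ h
      exact ⟨Or.inl this.1, Or.inl this.2⟩
    · have := lits_mem ψ ℓ h
      exact ⟨Or.inr this.1, Or.inr this.2⟩

theorem sat_transfer (s s' : Set Clause) (F : Finset FnTerm) (N : Finset Name)
    (h : ∀ c : Clause, (∀ ℓ ∈ c, ℓ.lhs ∈ F ∧ ℓ.rhs ∈ N) → UP s c → UP s' c) :
    ∀ φ : Form, φ.terms ⊆ F → φ.names ⊆ N → sat s φ → sat s' φ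
  | .atom t n, hF, hN, hs => by
    simp only [sat] at hs ⊢
    refine h _ (fun ℓ hℓ => ?_) hs
    have := lits_mem (.atom t n) ℓ (by simpa [Form.lits] using hℓ)
    exact ⟨hF this.1, hN this.2⟩
  | .not (.atom t n), hF, hN, hs => by
    simp only [sat] at hs ⊢
    refine h _ (fun ℓ hℓ => ?_) hs
    have := lits_mem (.not (.atom t n)) ℓ (by simpa [Form.lits] using hℓ)
    exact ⟨hF this.1, hN this.2⟩
  | .not (.not φ), hF, hN, hs => by
    simp only [sat] at hs ⊢
    exact sat_transfer s s' F N h φ (by simpa [Form.terms] using hF)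
      (by simpa [Form.names] using hN) hs
  | .not (.or φ ψ), hF, hN, hs => by
    simp only [sat] at hs ⊢
    simp only [Form.terms, Form.names, Finset.union_subset_iff] at hF hN
    exact ⟨sat_transfer s s' F N h (.not φ) (by simpa [Form.terms] using hF.1)
      (by simpa [Form.names] using hN.1) hs.1,
      sat_transfer s s' F N h (.not ψ) (by simpa [Form.terms] using hF.2)
      (by simpa [Form.names] using hN.2) hs.2⟩
  | .or φ ψ, hF, hN, hs => by
    simp only [sat] at hs ⊢
    split_ifs at hs ⊢ with hc
    · refine h _ (fun ℓ hℓ => ?_) hs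
      have := lits_mem _ ℓ hℓ
      exact ⟨hF this.1, hN this.2⟩
    · simp only [Form.terms, Form.names, Finset.union_subset_iff] at hF hN
      exact hs.imp (sat_transfer s s' F N h φ hF.1 hN.1) (sat_transfer s s' F N h ψ hF.2 hN.2)

theorem UP_mono {s s' : Set Clause} (h : s ⊆ s') {c : Clause} (hc : UP s c) : UP s' c := by
  induction hc with
  | mem hm => exact .mem (h hm)
  | unit _ _ i1 i2 => exact .unit i1 i2
  | sub _ hs i => exact .sub i hs

theorem satB_mono (α : Form) (k : ℕ) : ∀ {s s' : Set Clause}, s ⊆ s' →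
    satB s k α → satB s' k α := by
  induction k with
  | zero =>
    intro s s' h hs
    exact sat_transfer s s' α.terms α.names (fun c _ => UP_mono h) α subset_rfl subset_rfl hs
  | succ k ih =>
    rintro s s' h ⟨t, ht⟩
    exact ⟨t, fun n => ih (Set.union_subset_union_left _ h) (ht n)⟩

/-! Renaming of right-hand sides -/

def Lit.ren (π : Equiv.Perm Name) : Lit → Lit
  | .pos t n => .pos t (π n)
  | .neg t n => .neg t (π n)

theorem comp_ren (π : Equiv.Perm Name) (a b : Lit) :
    (a.ren π).complementary (b.ren π) = a.complementary b := by
  cases a <;> cases b <;> simp [Lit.ren, Lit.complementary, bne, Bool.beq_eq_decide_eq]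

theorem UP_ren (π : Equiv.Perm Name) {s s' : Set Clause}
    (h : ∀ c ∈ s, c.image (Lit.ren π) ∈ s') {c : Clause} (hc : UP s c) :
    UP s' (c.image (Lit.ren π)) := by
  induction hc with
  | mem hm => exact .mem (h _ hm)
  | @unit c ℓ _ _ i1 i2 =>
    rw [Finset.image_singleton] at i1
    have := UP.unit i1 i2
    convert this using 1
    ext x
    simp only [Clause.prop, Finset.mem_image, Finset.mem_filter]
    constructor
    · rintro ⟨a, ⟨ha, hb⟩, rfl⟩
      exact ⟨⟨a, ha, rfl⟩, by rw [comp_ren]; exact hb⟩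
    · rintro ⟨⟨a, ha, rfl⟩, hb⟩
      rw [comp_ren] at hb
      exact ⟨a, ⟨ha, hb⟩, rfl⟩
  | @sub c₁ c₂ _ hs i =>
    refine .sub i ⟨?_, ?_⟩
    · intro t n hm
      obtain ⟨a, ha, he⟩ := Finset.mem_image.1 hm
      cases a with
      | neg u m => simp [Lit.ren] at he
      | pos u m =>
        simp only [Lit.ren, Lit.pos.injEq] at he
        obtain ⟨rfl, rfl⟩ := he
        rcases hs.1 _ _ ha with hp | ⟨n', hn, hp⟩
        · exact Or.inl (Finset.mem_image_of_mem (Lit.ren π) hp)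
        · exact Or.inr ⟨π n', fun e => hn (π.injective e),
            Finset.mem_image_of_mem (Lit.ren π) hp⟩
    · intro t n hm
      obtain ⟨a, ha, he⟩ := Finset.mem_image.1 hm
      cases a with
      | pos u m => simp [Lit.ren] at he
      | neg u m =>
        simp only [Lit.ren, Lit.neg.injEq] at he
        obtain ⟨rfl, rfl⟩ := he
        exact Finset.mem_image_of_mem (Lit.ren π) (hs.2 _ _ ha)

theorem image_ren_fix (π : Equiv.Perm Name) (c : Clause) (h : ∀ ℓ ∈ c, π ℓ.rhs = ℓ.rhs) :
    c.image (Lit.ren π) = c := by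
  have : c.image (Lit.ren π) = c.image id := by
    apply Finset.image_congr
    intro ℓ hℓ
    have := h ℓ hℓ
    cases ℓ <;> simp_all [Lit.ren, Lit.rhs]
  simpa using this

theorem satB_ren (π : Equiv.Perm Name) (α : Form) (hα : ∀ n ∈ α.names, π n = n) (k : ℕ) :
    ∀ {s s' : Set Clause}, (∀ c ∈ s, c.image (Lit.ren π) ∈ s') →
    satB s k α → satB s' k α := by
  induction k with
  | zero =>
    intro s s' h hs
    refine sat_transfer s s' α.terms α.names (fun c hc hu => ?_) α subset_rfl subset_rfl hs
    have := UP_ren π h hu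
    rwa [image_ren_fix π c (fun ℓ hℓ => hα _ (hc ℓ hℓ).2)] at this
  | succ k ih =>
    rintro s s' h ⟨t, ht⟩
    refine ⟨t, fun n => ih ?_ (ht (π.symm n))⟩
    rintro c (hc | hc)
    · exact Or.inl (h c hc)
    · right
      rw [Set.mem_singleton_iff] at hc ⊢
      subst hc
      simp [Lit.ren]

/-! Fresh terms are useless -/

def trueAt (t : FnTerm) (n : Name) : Lit → Prop
  | .pos u m => u = t ∧ m = n
  | .neg u m => u = t ∧ m ≠ n

theorem UP_fresh (s : Set Clause) (t : FnTerm) (n : Name)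
    (hs : ∀ c ∈ s, ∀ ℓ ∈ c, Lit.lhs ℓ ≠ t) {c : Clause}
    (hc : UP (s ∪ {({Lit.pos t n} : Clause)}) c) :
    (∃ ℓ ∈ c, trueAt t n ℓ) ∨ UP s (c.filter (fun ℓ => ℓ.lhs ≠ t)) := by
  induction hc with
  | @mem c hm =>
    rcases hm with hm | hm
    · right
      rw [Finset.filter_true_of_mem (hs c hm)]
      exact .mem hm
    · left
      rw [Set.mem_singleton_iff] at hm
      subst hm
      exact ⟨_, Finset.mem_singleton_self _, rfl, rfl⟩
  | @unit c ℓ _ _ i1 i2 =>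
    by_cases hℓ : ℓ.lhs = t
    · rcases i1 with ⟨ℓ', h', ht⟩ | i1
      · rw [Finset.mem_singleton] at h'
        subst h'
        rcases i2 with ⟨a, ha, hta⟩ | i2
        · left
          refine ⟨a, ?_, hta⟩
          simp only [Clause.prop, Finset.mem_filter]
          refine ⟨ha, ?_⟩
          cases a <;> cases ℓ' <;> simp_all [trueAt, Lit.complementary] <;> grind
        · right
          refine .sub i2 ?_
          have hsub : c.filter (fun ℓ => ℓ.lhs ≠ t) ⊆ (c.prop ℓ').filter (fun ℓ => ℓ.lhs ≠ t) := by
            intro a ha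
            simp only [Clause.prop, Finset.mem_filter] at ha ⊢
            refine ⟨⟨ha.1, ?_⟩, ha.2⟩
            cases a <;> cases ℓ' <;> simp_all [Lit.lhs, Lit.complementary]
          exact ⟨fun _ _ h => Or.inl (hsub h), fun _ _ h => hsub h⟩
      · right
        refine .sub i1 ?_
        constructor <;> intro u m h <;>
          simp only [Finset.mem_filter, Finset.mem_singleton] at h <;>
          exact absurd (h.1 ▸ hℓ) h.2
    · have i1' : UP s {ℓ} := by
        rcases i1 with ⟨ℓ', h', ht⟩ | i1
        · rw [Finset.mem_singleton] at h'
          subst h'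
          cases ℓ' <;> exact absurd ht.1 hℓ
        · rwa [Finset.filter_true_of_mem (by simpa using hℓ)] at i1
      rcases i2 with ⟨a, ha, hta⟩ | i2
      · left
        refine ⟨a, ?_, hta⟩
        simp only [Clause.prop, Finset.mem_filter]
        refine ⟨ha, ?_⟩
        cases a <;> cases ℓ <;> simp_all [trueAt, Lit.lhs, Lit.complementary] <;> grind
      · right
        have := UP.unit i1' i2
        convert this using 1
        simp only [Clause.prop, Finset.filter_filter, and_comm]
  | @sub c₁ c₂ _ hsub i =>
    rcases i with ⟨a, ha, hta⟩ | i
    · left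
      cases a with
      | pos u m =>
        obtain ⟨rfl, rfl⟩ := hta
        rcases hsub.1 _ _ ha with h | ⟨n', hn, h⟩
        · exact ⟨_, h, rfl, rfl⟩
        · exact ⟨_, h, rfl, hn⟩
      | neg u m => exact ⟨_, hsub.2 _ _ ha, hta⟩
    · right
      refine .sub i ⟨?_, ?_⟩
      · intro u m h
        simp only [Finset.mem_filter] at h ⊢
        rcases hsub.1 _ _ h.1 with h' | ⟨n', hn, h'⟩
        · exact Or.inl ⟨h', h.2⟩
        · exact Or.inr ⟨n', hn, h', h.2⟩
      · intro u m h
        simp only [Finset.mem_filter] at h ⊢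
        exact ⟨hsub.2 _ _ h.1, h.2⟩

theorem satB_fresh (α : Form) (t : FnTerm) (n : Name) (hα : t ∉ α.terms) (k : ℕ) :
    ∀ {s : Set Clause}, (∀ c ∈ s, ∀ ℓ ∈ c, Lit.lhs ℓ ≠ t) →
    satB (s ∪ {({Lit.pos t n} : Clause)}) k α → satB s k α := by
  induction k with
  | zero =>
    intro s h hs
    refine sat_transfer _ s α.terms α.names (fun c hc hu => ?_) α subset_rfl subset_rfl hs
    have hne : ∀ ℓ ∈ c, ℓ.lhs ≠ t := fun ℓ hℓ e => hα (e ▸ (hc ℓ hℓ).1)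
    rcases UP_fresh s t n h hu with ⟨ℓ, hℓ, ht⟩ | h'
    · exfalso
      apply hne ℓ hℓ
      cases ℓ <;> exact ht.1
    · rwa [Finset.filter_true_of_mem hne] at h'
  | succ k ih =>
    rintro s h ⟨u, hu⟩
    by_cases e : u = t
    · subst e
      have h1 := hu n
      rw [Set.union_assoc, Set.union_self] at h1
      exact ⟨u, fun m => satB_mono α k Set.subset_union_left (ih h h1)⟩
    · refine ⟨u, fun m => ih ?_ (by rw [Set.union_right_comm]; exact hu m)⟩
      rintro c (hc | hc) ℓ hℓ
      · exact h c hc ℓ hℓ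
      · rw [Set.mem_singleton_iff] at hc
        subst hc
        rw [Finset.mem_singleton] at hℓ
        subst hℓ
        exact e

theorem terms_nonempty (α : Form) : α.terms.Nonempty := by
  induction α with
  | atom t n => simp [Form.terms]
  | not φ ih => simpa [Form.terms] using ih
  | or φ ψ i _ => exact i.mono (by simp [Form.terms])

/-- **Finitely many function terms and names suffice for case splits**
(Lemma 7): with `F` (resp. `N`) containing all function terms (resp. names) of
`s` and `α` and `n̂ ∉ N` a fresh name, `s ⊨ˢ B_{k+1} α` iff for some `t ∈ F`,
for all `n ∈ N ∪ {n̂}`, `s ∪ {t ≈ n} ⊨ˢ B_k α`. -/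
theorem finite_case_splits (s : Set Clause) (α : Form)
    (F : Finset FnTerm) (N : Finset Name)
    (hsF : ∀ c ∈ s, ∀ ℓ ∈ c, Lit.lhs ℓ ∈ F) (hαF : α.terms ⊆ F)
    (hsN : ∀ c ∈ s, ∀ ℓ ∈ c, Lit.names ℓ ⊆ N) (hαN : α.names ⊆ N)
    (nhat : Name) (hnhat : nhat ∉ N) (k : ℕ) :
    satB s (k + 1) α ↔
      ∃ t ∈ F, ∀ n ∈ insert nhat N,
        satB (s ∪ {({Lit.pos t n} : Clause)}) k α := by
  constructor
  · rintro ⟨t, ht⟩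
    by_cases h : t ∈ F
    · exact ⟨t, h, fun n _ => ht n⟩
    · have h0 : satB s k α := satB_fresh α t 0 (fun e => h (hαF e)) k
        (fun c hc ℓ hℓ e => h (e ▸ hsF c hc ℓ hℓ)) (ht 0)
      obtain ⟨u, hu⟩ := terms_nonempty α
      exact ⟨u, hαF hu, fun n _ => satB_mono α k Set.subset_union_left h0⟩
  · rintro ⟨t, _, ht⟩
    refine ⟨t, fun n => ?_⟩
    by_cases hn : n ∈ N
    · exact ht n (Finset.mem_insert_of_mem hn)
    · have hfix : ∀ m ∈ N, Equiv.swap nhat n m = m := fun m hm =>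
        Equiv.swap_apply_of_ne_of_ne (fun e => hnhat (e ▸ hm)) (fun e => hn (e ▸ hm))
      refine satB_ren (Equiv.swap nhat n) α (fun m hm => hfix m (hαN hm)) k ?_
        (ht nhat (Finset.mem_insert_self _ _))
      rintro c (hc | hc)
      · left
        rwa [image_ren_fix _ c (fun ℓ hℓ => hfix _ (hsN c hc ℓ hℓ (Finset.mem_insert_self _ _)))]
      · right
        rw [Set.mem_singleton_iff] at hc ⊢
        subst hc
        simp [Lit.ren]
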